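/- Let G be a finite group, U : G → (unitary d×d complex matrices) a group homomorphism, H a subgroup of G, and ψ a unit vector in ℂ^d such that for every h ∈ H there exists c ∈ ℂ with U(h)ψ = c·ψ (ψ is a common eigenvector of U restricted to H). Let P_ψ denote the orthogonal projection of ℂ^d onto the span of ψ (the outer product |ψ⟩⟨ψ|). Then for every g' ∈ G, Σ_{g ∈ g'H} (d/|G|)·U(g)·P_ψ·U(g)* = (d·|H|/|G|)·U(g')·P_ψ·U(g')*, where the sum runs over the left coset g'H. In particular, if |H| = |G|/d, then Σ_{g ∈ g'H} (d/|G|)·U(g)·P_ψ·U(g)* = U(g')·P_ψ·U(g')*, which is a rank-one orthogonal projection. -/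

import Mathlib

open scoped BigOperators Kronecker ComplexOrder Matrix

noncomputable section


namespace QProg

/-- The positive-semidefinite square root of a matrix, extended by `0` to all matrices. -/
noncomputable def matSqrt {α : Type*} [Fintype α] [DecidableEq α]
    (A : Matrix α α ℂ) : Matrix α α ℂ :=
  @dite _ A.PosSemidef (Classical.propDecidable _) (fun h =>
    (h.1.eigenvectorUnitary : Matrix α α ℂ) *
      Matrix.diagonal (RCLike.ofReal ∘ Real.sqrt ∘ h.1.eigenvalues) *
      (star h.1.eigenvectorUnitary : Matrix α α ℂ)) (fun _ => 0)

/-- The fidelity `F(ρ,σ) = Tr √(√ρ σ √ρ)` of two (density) matrices. -/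
noncomputable def fid {α : Type*} [Fintype α] [DecidableEq α]
    (ρ σ : Matrix α α ℂ) : ℝ :=
  ((matSqrt (matSqrt ρ * σ * matSqrt ρ)).trace).re

/-- A density matrix: positive semidefinite with unit trace. -/
def IsDensity {α : Type*} [Fintype α] [DecidableEq α] (ρ : Matrix α α ℂ) : Prop :=
  ρ.PosSemidef ∧ ρ.trace = 1

/-- An `n`-outcome POVM: positive semidefinite effects summing to the identity. -/
def IsPOVM {α : Type*} [Fintype α] [DecidableEq α] {n : ℕ}
    (E : Fin n → Matrix α α ℂ) : Prop :=
  (∀ i, (E i).PosSemidef) ∧ ∑ i, E i = 1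

/-- The outcome distribution `p^E_ρ(i) = Tr[E(i) ρ]`. -/
noncomputable def outDist {α : Type*} [Fintype α] [DecidableEq α] {n : ℕ}
    (E : Fin n → Matrix α α ℂ) (ρ : Matrix α α ℂ) (i : Fin n) : ℝ :=
  ((E i * ρ).trace).re

/-- The Bhattacharyya coefficient `B(p,q) = ∑ᵢ √(p i) √(q i)`. -/
noncomputable def bhat {n : ℕ} (p q : Fin n → ℝ) : ℝ :=
  ∑ i, Real.sqrt (p i) * Real.sqrt (q i)

/-- `B(E₁,E₂)`: infimum of `B(p^{E₁}_{ρ₁}, p^{E₂}_{ρ₂}) / F(ρ₁,ρ₂)` over pairs of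
density matrices with nonvanishing fidelity. -/
noncomputable def obsB {α : Type*} [Fintype α] [DecidableEq α] {n : ℕ}
    (E₁ E₂ : Fin n → Matrix α α ℂ) : ℝ :=
  sInf { r : ℝ | ∃ ρ₁ ρ₂ : Matrix α α ℂ, IsDensity ρ₁ ∧ IsDensity ρ₂ ∧
    fid ρ₁ ρ₂ ≠ 0 ∧ r = bhat (outDist E₁ ρ₁) (outDist E₂ ρ₂) / fid ρ₁ ρ₂ }

/-- A post-processing from `n` outcomes to `m` outcomes. -/
def IsPostProc {n m : ℕ} (lam : Fin n → Fin m → ℝ) : Prop :=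
  (∀ i y, 0 ≤ lam i y) ∧ ∀ i, ∑ y, lam i y = 1

/-- The action `(λ⋆E)(y) = ∑ᵢ λ(i|y) E(i)` of a post-processing on a POVM. -/
noncomputable def ppStar {α : Type*} [Fintype α] [DecidableEq α] {n m : ℕ}
    (lam : Fin n → Fin m → ℝ) (E : Fin n → Matrix α α ℂ) (y : Fin m) :
    Matrix α α ℂ :=
  ∑ i, (lam i y : ℂ) • E i

/-- The action `(λ⋆p)(y) = ∑ᵢ λ(i|y) p(i)` of a post-processing on a probability vector. -/
noncomputable def ppStarVec {n m : ℕ} (lam : Fin n → Fin m → ℝ) (p : Fin n → ℝ)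
    (y : Fin m) : ℝ :=
  ∑ i, lam i y * p i

/-- A probability vector on `{1,…,n}`. -/
def IsProbVec {n : ℕ} (p : Fin n → ℝ) : Prop :=
  (∀ i, 0 ≤ p i) ∧ ∑ i, p i = 1

/-- `F(λ₁,λ₂)`: infimum of `B(λ₁⋆p, λ₂⋆p)` over probability vectors `p`. -/
noncomputable def ppF {n m : ℕ} (lam₁ lam₂ : Fin n → Fin m → ℝ) : ℝ :=
  sInf { r : ℝ | ∃ p : Fin n → ℝ, IsProbVec p ∧
    r = bhat (ppStarVec lam₁ p) (ppStarVec lam₂ p) }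

/-!
Since `U(h)` preserves the norm, an eigenvalue of `U(h)` at `ψ` is a phase, and it cancels in
`U(h) P_ψ U(h)*`. Hence `P_ψ` is fixed by conjugation with `U(h)`, so all the effects indexed by a
left coset of `H` coincide and their sum is `|H|` times any one of them.
-/

section CosetSum

lemma conj_mul_eq_conj_of_conj_eq_self {G A : Type*} [Monoid G] [Monoid A] [StarMul A]
    {U : G →* unitary A} {x : A} {h : G} (hx : (U h : A) * x * star (U h : A) = x) (g : G) :
    (U (g * h) : A) * x * star (U (g * h) : A) = U g * x * star (U g : A) := by
  calc (U (g * h) : A) * x * star (U (g * h) : A)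
      = U g * (U h * x * star (U h : A)) * star (U g : A) := by
        simp only [map_mul, Submonoid.coe_mul, star_mul, mul_assoc]
    _ = U g * x * star (U g : A) := by rw [hx]

lemma sum_coset_smul_conj {G A S : Type*} [Group G] [Semiring A] [StarMul A] [Semiring S]
    [Module S A] {U : G →* unitary A} (H : Subgroup G) [Fintype H] {x : A}
    (hx : ∀ h : H, (U h : A) * x * star (U h : A) = x) (w : S) (g : G) :
    ∑ h : H, w • ((U (g * h) : A) * x * star (U (g * h) : A)) =
      (w * Fintype.card H) • (U g * x * star (U g : A)) := by
  simp only [conj_mul_eq_conj_of_conj_eq_self (hx _), ← Finset.smul_sum, Finset.sum_const,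
    Finset.card_univ, mul_smul, Nat.cast_smul_eq_nsmul]

end CosetSum

section OuterProduct

open Matrix

variable {m n R : Type*} [Fintype n]

lemma mul_vecMulVec_star_mul_conjTranspose [NonUnitalSemiring R] [StarRing R]
    (A : Matrix m n R) (v : n → R) :
    A * vecMulVec v (star v) * Aᴴ = vecMulVec (A *ᵥ v) (star (A *ᵥ v)) := by
  rw [mul_vecMulVec, vecMulVec_mul, star_mulVec]

lemma isStarProjection_vecMulVec_star [Semiring R] [StarRing R] {v : n → R}
    (hv : star v ⬝ᵥ v = 1) : IsStarProjection (vecMulVec v (star v)) where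
  isIdempotentElem := by
    rw [IsIdempotentElem, vecMulVec_mul_vecMulVec, hv, one_smul]
  isSelfAdjoint := by
    rw [IsSelfAdjoint, star_eq_conjTranspose, conjTranspose_vecMulVec, star_star]

lemma matrix_rank_eq_zero_iff [CommRing R] [IsDomain R] {A : Matrix m n R} :
    A.rank = 0 ↔ A = 0 := by
  classical
  refine ⟨fun hA => ?_, fun hA => hA ▸ rank_zero⟩
  rw [rank, Submodule.finrank_eq_zero, LinearMap.range_eq_bot] at hA
  exact ext_of_mulVec_single fun j => by
    simpa only [mulVecLin_apply, LinearMap.zero_apply, zero_mulVec] using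
      LinearMap.congr_fun hA (Pi.single j 1)

lemma rank_vecMulVec_eq_one [CommRing R] [IsDomain R] {w : m → R} {v : n → R}
    (hw : w ≠ 0) (hv : v ≠ 0) : (vecMulVec w v).rank = 1 := by
  obtain ⟨i, hi⟩ := Function.ne_iff.mp hw
  obtain ⟨j, hj⟩ := Function.ne_iff.mp hv
  have hne : vecMulVec w v ≠ 0 := fun h => mul_ne_zero hi hj (congrFun₂ h i j)
  exact le_antisymm (rank_vecMulVec_le w v) <|
    Nat.one_le_iff_ne_zero.mpr <| matrix_rank_eq_zero_iff.not.mpr hne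

variable [DecidableEq n] [CommRing R] [StarRing R]

lemma star_mulVec_dotProduct_mulVec_of_mem_unitaryGroup {A : Matrix n n R}
    (hA : A ∈ unitaryGroup n R) (v w : n → R) :
    star (A *ᵥ v) ⬝ᵥ (A *ᵥ w) = star v ⬝ᵥ w := by
  rw [star_mulVec, ← dotProduct_mulVec, mulVec_mulVec, ← star_eq_conjTranspose,
    mem_unitaryGroup_iff'.mp hA, one_mulVec]

lemma star_mul_self_eq_one_of_mulVec_eq_smul {A : Matrix n n R} (hA : A ∈ unitaryGroup n R)
    {v : n → R} (hv : IsRegular (star v ⬝ᵥ v)) {c : R} (hc : A *ᵥ v = c • v) :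
    star c * c = 1 := by
  refine hv.right ?_
  calc star c * c * (star v ⬝ᵥ v)
      = star (A *ᵥ v) ⬝ᵥ (A *ᵥ v) := by
        rw [hc, star_smul, smul_dotProduct, dotProduct_smul, smul_smul, smul_eq_mul]
    _ = 1 * (star v ⬝ᵥ v) := by
        rw [star_mulVec_dotProduct_mulVec_of_mem_unitaryGroup hA, one_mul]

lemma conj_vecMulVec_star_eq_self_of_mulVec_eq_smul {A : Matrix n n R}
    (hA : A ∈ unitaryGroup n R) {v : n → R} (hv : IsRegular (star v ⬝ᵥ v)) {c : R}
    (hc : A *ᵥ v = c • v) :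
    A * vecMulVec v (star v) * Aᴴ = vecMulVec v (star v) := by
  rw [mul_vecMulVec_star_mul_conjTranspose, hc, star_smul, smul_vecMulVec, vecMulVec_smul,
    smul_smul, mul_comm, star_mul_self_eq_one_of_mulVec_eq_smul hA hv hc, one_smul]

end OuterProduct

theorem covariant_coset_merging_general {K n G : Type*} [Field K] [StarRing K]
    [Fintype n] [DecidableEq n] [Group G] [Fintype G] (hG : (Fintype.card G : K) ≠ 0)
    (U : G →* Matrix.unitaryGroup n K) (H : Subgroup G) [Fintype H]
    (ψ : n → K) (hψ : star ψ ⬝ᵥ ψ = 1)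
    (heig : ∀ h : H, ∃ c : K, (U (h : G) : Matrix n n K).mulVec ψ = c • ψ) (g' : G) :
    (∑ h : H, ((Fintype.card n : K) / (Fintype.card G : K)) •
        ((U (g' * (h : G)) : Matrix n n K) * Matrix.vecMulVec ψ (star ψ) *
          (U (g' * (h : G)) : Matrix n n K)ᴴ) =
      (((Fintype.card n : K) * (Fintype.card H : K)) / (Fintype.card G : K)) •
        ((U g' : Matrix n n K) * Matrix.vecMulVec ψ (star ψ) * (U g' : Matrix n n K)ᴴ)) ∧
    (Fintype.card G = Fintype.card n * Fintype.card H →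
      (∑ h : H, ((Fintype.card n : K) / (Fintype.card G : K)) •
          ((U (g' * (h : G)) : Matrix n n K) * Matrix.vecMulVec ψ (star ψ) *
            (U (g' * (h : G)) : Matrix n n K)ᴴ) =
        (U g' : Matrix n n K) * Matrix.vecMulVec ψ (star ψ) * (U g' : Matrix n n K)ᴴ) ∧
      (let P := (U g' : Matrix n n K) * Matrix.vecMulVec ψ (star ψ) * (U g' : Matrix n n K)ᴴ
       P * P = P ∧ Pᴴ = P ∧ P.rank = 1)) := by
  have hfix (h : H) : (U h : Matrix n n K) * Matrix.vecMulVec ψ (star ψ) *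
      (U h : Matrix n n K)ᴴ = Matrix.vecMulVec ψ (star ψ) := by
    obtain ⟨c, hc⟩ := heig h
    exact conj_vecMulVec_star_eq_self_of_mulVec_eq_smul (U h).2 (hψ ▸ isRegular_one) hc
  have hsum := sum_coset_smul_conj H hfix ((Fintype.card n : K) / Fintype.card G) g'
  rw [div_mul_eq_mul_div] at hsum
  refine ⟨hsum, fun hcard => ⟨?_, ?_⟩⟩
  · rwa [← Nat.cast_mul, ← hcard, div_self hG, one_smul] at hsum
  · have hφ : star ((U g' : Matrix n n K).mulVec ψ) ⬝ᵥ (U g' : Matrix n n K).mulVec ψ = 1 :=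
      (star_mulVec_dotProduct_mulVec_of_mem_unitaryGroup (U g').2 ψ ψ).trans hψ
    have hφ₀ : (U g' : Matrix n n K).mulVec ψ ≠ 0 := fun h => by simp [h] at hφ
    have hproj := isStarProjection_vecMulVec_star hφ
    rw [mul_vecMulVec_star_mul_conjTranspose]
    exact ⟨hproj.isIdempotentElem, hproj.isSelfAdjoint,
      rank_vecMulVec_eq_one hφ₀ (star_ne_zero.mpr hφ₀)⟩

/-- Section 3.2: merging the effects of the covariant observable seeded by a
common eigenvector `ψ` of `U` restricted to a subgroup `H` along the left coset `g'H` yields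
`(d |H| / |G|) U(g') P_ψ U(g')*`; when `|G| = d |H|` this is a rank-one orthogonal projection. -/
theorem covariant_coset_merging {d : ℕ} {G : Type*} [Group G] [Fintype G]
    (U : G →* Matrix.unitaryGroup (Fin d) ℂ)
    (H : Subgroup G) [Fintype H]
    (ψ : Fin d → ℂ) (hψ : star ψ ⬝ᵥ ψ = 1)
    (heig : ∀ h : H, ∃ c : ℂ,
      (U (h : G) : Matrix (Fin d) (Fin d) ℂ).mulVec ψ = c • ψ)
    (g' : G) :
    (∑ h : H, ((d : ℂ) / (Fintype.card G : ℂ)) •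
        ((U (g' * (h : G)) : Matrix (Fin d) (Fin d) ℂ) *
          Matrix.vecMulVec ψ (star ψ) *
          (U (g' * (h : G)) : Matrix (Fin d) (Fin d) ℂ)ᴴ) =
      (((d : ℂ) * (Fintype.card H : ℂ)) / (Fintype.card G : ℂ)) •
        ((U g' : Matrix (Fin d) (Fin d) ℂ) * Matrix.vecMulVec ψ (star ψ) *
          (U g' : Matrix (Fin d) (Fin d) ℂ)ᴴ)) ∧
    (Fintype.card G = d * Fintype.card H →
      (∑ h : H, ((d : ℂ) / (Fintype.card G : ℂ)) •
          ((U (g' * (h : G)) : Matrix (Fin d) (Fin d) ℂ) *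
            Matrix.vecMulVec ψ (star ψ) *
            (U (g' * (h : G)) : Matrix (Fin d) (Fin d) ℂ)ᴴ) =
        (U g' : Matrix (Fin d) (Fin d) ℂ) * Matrix.vecMulVec ψ (star ψ) *
          (U g' : Matrix (Fin d) (Fin d) ℂ)ᴴ) ∧
      (let P := (U g' : Matrix (Fin d) (Fin d) ℂ) * Matrix.vecMulVec ψ (star ψ) *
          (U g' : Matrix (Fin d) (Fin d) ℂ)ᴴ
       P * P = P ∧ Pᴴ = P ∧ P.rank = 1)) := by
  simpa only [Fintype.card_fin] using
    covariant_coset_merging_general (Nat.cast_ne_zero.mpr Fintype.card_ne_zero) U H ψ hψ heig g'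
end QProg
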